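/- Let n ≥ 1 and μ ∈ (0, 2). For ξ ∈ ℝⁿ \ {0} write r := |ξ| and b(r) := √(r² - (μ²/4) log²(1+r)), and define χ(t,ξ) := (1+r)^{-μt/2} (1/b(r)) sin(γ t r), where γ := √(4-μ²)/2. Then there exist constants C > 0, D > 0 and t₀ > 0, depending only on n and μ, such that for all t ≥ t₀: C t^{2-n} ≤ ∫_{|ξ| ≤ 1} |χ(t,ξ)|² dξ ≤ D t^{2-n}. -/

import Mathlib

open MeasureTheory

lemma aux_exp_int (n : ℕ) (hn : 1 ≤ n) (c : ℝ) (hc : 0 < c) :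
    Integrable (fun x : EuclideanSpace ℝ (Fin n) => Real.exp (-(c * ‖x‖))) := by
  haveI : Nonempty (Fin n) := ⟨⟨0, hn⟩⟩
  have h := (integrable_fun_norm_addHaar (volume : Measure (EuclideanSpace ℝ (Fin n)))
    (f := fun y : ℝ => Real.exp (-(c * y)))).2
  apply h
  have := integrableOn_rpow_mul_exp_neg_mul_rpow (p := 1) (s := ((n - 1 : ℕ) : ℝ)) (b := c)
    (by have : (0:ℝ) ≤ ((n-1:ℕ):ℝ) := Nat.cast_nonneg _
        linarith) one_pos hc
  refine this.congr_fun (fun y hy => ?_) measurableSet_Ioi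
  simp [Real.rpow_natCast]

lemma aux_b (μ : ℝ) (hμ : μ ∈ Set.Ioo (0:ℝ) 2) (r : ℝ) (hr : 0 ≤ r) :
    (1 - μ ^ 2 / 4) * r ^ 2 ≤ r ^ 2 - μ ^ 2 / 4 * Real.log (1 + r) ^ 2 ∧
      r ^ 2 - μ ^ 2 / 4 * Real.log (1 + r) ^ 2 ≤ r ^ 2 := by
  have h0 : 0 ≤ Real.log (1 + r) := Real.log_nonneg (by linarith)
  have h1 : Real.log (1 + r) ≤ r := by
    have := Real.log_le_sub_one_of_pos (show 0 < 1 + r by linarith)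
    linarith
  have h2 : Real.log (1 + r) ^ 2 ≤ r ^ 2 := by gcongr
  constructor
  · nlinarith [sq_nonneg μ]
  · have : 0 ≤ μ ^ 2 / 4 * Real.log (1 + r) ^ 2 := by positivity
    linarith

lemma aux_sq (μ t r : ℝ) (hμ : μ ∈ Set.Ioo (0:ℝ) 2) (hr : 0 ≤ r) (γ : ℝ) :
    |(1 + r) ^ (-(μ * t) / 2) *
      (1 / Real.sqrt (r ^ 2 - μ ^ 2 / 4 * Real.log (1 + r) ^ 2)) * Real.sin (γ * t * r)| ^ 2
    = Real.exp (-(μ * t * Real.log (1 + r))) *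
      (Real.sin (γ * t * r) ^ 2 / (r ^ 2 - μ ^ 2 / 4 * Real.log (1 + r) ^ 2)) := by
  have h := aux_b μ hμ r hr
  have hnn : 0 ≤ r ^ 2 - μ ^ 2 / 4 * Real.log (1 + r) ^ 2 := by
    refine le_trans ?_ h.1
    have : 0 ≤ 1 - μ ^ 2 / 4 := by nlinarith [hμ.1, hμ.2]
    positivity
  rw [sq_abs, mul_pow, mul_pow, div_pow, Real.sq_sqrt hnn,
    Real.rpow_def_of_pos (by linarith), ← Real.exp_nat_mul]
  rw [show ((2:ℕ):ℝ) * (Real.log (1 + r) * (-(μ * t) / 2)) = -(μ * t * Real.log (1 + r)) by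
    push_cast; ring]
  ring

lemma aux_upper (μ t r γ : ℝ) (hμ : μ ∈ Set.Ioo (0:ℝ) 2) (hr : 0 ≤ r) (hr1 : r ≤ 1)
    (ht : 0 ≤ t) (hγ : γ ^ 2 = 1 - μ ^ 2 / 4) :
    Real.exp (-(μ * t * Real.log (1 + r))) *
      (Real.sin (γ * t * r) ^ 2 / (r ^ 2 - μ ^ 2 / 4 * Real.log (1 + r) ^ 2)) ≤
    t ^ 2 * Real.exp (-(μ / 2 * ‖t * r‖)) := by
  have hμ0 := hμ.1
  have h := (aux_b μ hμ r hr).1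
  have hγ0 : 0 < γ ^ 2 := by rw [hγ]; nlinarith [hμ.1, hμ.2]
  have hlog : r / 2 ≤ Real.log (1 + r) := by
    have := Real.one_sub_inv_le_log_of_pos (show 0 < 1 + r by linarith)
    refine le_trans ?_ this
    rw [show 1 - (1 + r)⁻¹ = r / (1 + r) by field_simp; ring]
    gcongr
    linarith
  have h1 : Real.exp (-(μ * t * Real.log (1 + r))) ≤ Real.exp (-(μ / 2 * ‖t * r‖)) := by
    apply Real.exp_le_exp.2
    rw [Real.norm_of_nonneg (by positivity)]
    have : μ * t * (r / 2) ≤ μ * t * Real.log (1 + r) := by gcongr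
    linarith
  have h2 : Real.sin (γ * t * r) ^ 2 / (r ^ 2 - μ ^ 2 / 4 * Real.log (1 + r) ^ 2) ≤ t ^ 2 := by
    rcases hr.eq_or_lt with rfl | hr'
    · simp; positivity
    · rw [← hγ] at h
      have hp : 0 < γ ^ 2 * r ^ 2 := by positivity
      rw [div_le_iff₀ (lt_of_lt_of_le hp h)]
      have hs : Real.sin (γ * t * r) ^ 2 ≤ (γ * t * r) ^ 2 := sq_le_sq.2 Real.abs_sin_le_abs
      calc _ ≤ _ := hs
        _ = t ^ 2 * (γ ^ 2 * r ^ 2) := by ring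
        _ ≤ _ := by gcongr
  rw [mul_comm (t ^ 2)]
  exact mul_le_mul_of_nonneg h1 h2 (Real.exp_pos _).le (by positivity)

lemma aux_lower (μ t r γ : ℝ) (hμ : μ ∈ Set.Ioo (0:ℝ) 2) (hr : 0 < r)
    (ht : 0 < t) (htr : t * r ≤ 1) (hγ0 : 0 < γ) (hγ : γ ^ 2 = 1 - μ ^ 2 / 4) :
    Real.exp (-μ) * (2 / Real.pi * γ) ^ 2 * t ^ 2 ≤ 
    Real.exp (-(μ * t * Real.log (1 + r))) *
      (Real.sin (γ * t * r) ^ 2 / (r ^ 2 - μ ^ 2 / 4 * Real.log (1 + r) ^ 2)) := by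
  have hμ0 := hμ.1
  have h := aux_b μ hμ r hr.le
  have hγ1 : γ ≤ 1 := by nlinarith
  have hp : 0 < γ ^ 2 * r ^ 2 := by positivity
  rw [← hγ] at h
  have h1 : Real.log (1 + r) ≤ r := by
    have := Real.log_le_sub_one_of_pos (show 0 < 1 + r by linarith)
    linarith
  have hx : γ * t * r ≤ 1 := by
    rw [mul_assoc]
    exact mul_le_one₀ hγ1 (by positivity) htr
  have hs : 2 / Real.pi * (γ * t * r) ≤ Real.sin (γ * t * r) :=
    Real.mul_le_sin (by positivity) (by linarith [Real.pi_gt_three])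
  rw [mul_assoc]
  apply mul_le_mul_of_nonneg
  · apply Real.exp_le_exp.2
    have : μ * t * Real.log (1 + r) ≤ μ * t * r := by gcongr
    nlinarith
  · rw [le_div_iff₀ (lt_of_lt_of_le hp h.1)]
    calc _ ≤ (2 / Real.pi * γ) ^ 2 * t ^ 2 * r ^ 2 := by gcongr; exact h.2
      _ = (2 / Real.pi * (γ * t * r)) ^ 2 := by ring
      _ ≤ _ := by gcongr
  · positivity
  · exact div_nonneg (sq_nonneg _) (hp.le.trans h.1)

/-- Lemma 5.1: for `μ ∈ (0,2)`, the profile `χ(t,ξ) = (1+r)^{-μt/2} sin(γtr)/b(r)`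
(with `r = |ξ|`) satisfies `C t^{2-n} ≤ ∫_{|ξ|≤1} |χ(t,ξ)|² dξ ≤ D t^{2-n}`. -/
theorem stmt12 (n : ℕ) (hn : 1 ≤ n) (μ : ℝ) (hμ : μ ∈ Set.Ioo (0:ℝ) 2) :
    let b : ℝ → ℝ := fun r => Real.sqrt (r ^ 2 - μ ^ 2 / 4 * Real.log (1 + r) ^ 2)
    let γ : ℝ := Real.sqrt (4 - μ ^ 2) / 2
    let χ : ℝ → EuclideanSpace ℝ (Fin n) → ℝ := fun t ξ =>
      (1 + ‖ξ‖) ^ (-(μ * t) / 2) * (1 / b ‖ξ‖) * Real.sin (γ * t * ‖ξ‖)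
    ∃ C D t₀ : ℝ, 0 < C ∧ 0 < D ∧ 0 < t₀ ∧ ∀ t : ℝ, t₀ ≤ t →
      C * t ^ ((2 : ℝ) - n) ≤
        (∫ ξ in Metric.closedBall (0 : EuclideanSpace ℝ (Fin n)) 1, |χ t ξ| ^ 2) ∧
      (∫ ξ in Metric.closedBall (0 : EuclideanSpace ℝ (Fin n)) 1, |χ t ξ| ^ 2) ≤
        D * t ^ ((2 : ℝ) - n) := by
  intro b γ χ
  haveI : Nonempty (Fin n) := ⟨⟨0, hn⟩⟩
  have h4 : 0 < 4 - μ ^ 2 := by nlinarith [hμ.1, hμ.2]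
  have hγ0 : 0 < γ := by simp only [γ]; positivity
  have hγ : γ ^ 2 = 1 - μ ^ 2 / 4 := by
    simp only [γ]; rw [div_pow, Real.sq_sqrt h4.le]; ring
  have hexp := aux_exp_int n hn (μ / 2) (by linarith [hμ.1])
  set I := ∫ x : EuclideanSpace ℝ (Fin n), Real.exp (-(μ / 2 * ‖x‖)) with hI
  have hI0 : 0 ≤ I := integral_nonneg fun x => (Real.exp_pos _).le
  set V := volume.real (Metric.closedBall (0 : EuclideanSpace ℝ (Fin n)) 1) with hV
  have hV0 : 0 < V := by
    refine ENNReal.toReal_pos (Metric.measure_closedBall_pos _ _ one_pos).ne' 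
      measure_closedBall_lt_top.ne
  refine ⟨Real.exp (-μ) * (2 / Real.pi * γ) ^ 2 * V, I + 1, 1, by positivity, by positivity,
    one_pos, fun t ht => ?_⟩
  have ht0 : 0 < t := by linarith
  have hχ : ∀ ξ, |χ t ξ| ^ 2 = Real.exp (-(μ * t * Real.log (1 + ‖ξ‖))) *
      (Real.sin (γ * t * ‖ξ‖) ^ 2 / (‖ξ‖ ^ 2 - μ ^ 2 / 4 * Real.log (1 + ‖ξ‖) ^ 2)) :=
    fun ξ => aux_sq μ t ‖ξ‖ hμ (norm_nonneg _) γ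
  have hpow : t ^ ((2 : ℝ) - n) = t ^ 2 * (t ^ n)⁻¹ := by
    rw [Real.rpow_sub ht0, Real.rpow_natCast, Real.rpow_ofNat, div_eq_mul_inv]
  have hmeas : Measurable fun ξ => |χ t ξ| ^ 2 := by
    simp_rw [hχ]; fun_prop
  have hup : ∀ ξ ∈ Metric.closedBall (0 : EuclideanSpace ℝ (Fin n)) 1,
      |χ t ξ| ^ 2 ≤ t ^ 2 * Real.exp (-(μ / 2 * ‖t • ξ‖)) := by
    intro ξ hξ
    rw [hχ]
    have := aux_upper μ t ‖ξ‖ γ hμ (norm_nonneg _) (by simpa using hξ) ht0.le hγ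
    simpa [norm_smul] using this
  have hgint : Integrable (fun ξ : EuclideanSpace ℝ (Fin n) =>
      t ^ 2 * Real.exp (-(μ / 2 * ‖t • ξ‖))) :=
    ((integrable_comp_smul_iff volume (fun x : EuclideanSpace ℝ (Fin n) =>
      Real.exp (-(μ / 2 * ‖x‖))) ht0.ne').2 hexp).const_mul _
  have hfint : IntegrableOn (fun ξ => |χ t ξ| ^ 2) (Metric.closedBall 0 1) := by
    refine Integrable.mono' hgint.integrableOn hmeas.aestronglyMeasurable ?_
    filter_upwards [ae_restrict_mem measurableSet_closedBall] with ξ hξ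
    rw [Real.norm_of_nonneg (by positivity)]
    exact hup ξ hξ
  rw [hpow]
  constructor
  · have hsub : Metric.closedBall (0 : EuclideanSpace ℝ (Fin n)) t⁻¹ ⊆ Metric.closedBall 0 1 :=
      Metric.closedBall_subset_closedBall (inv_le_one_of_one_le₀ ht)
    have hvol : volume.real (Metric.closedBall (0 : EuclideanSpace ℝ (Fin n)) t⁻¹)
        = (t ^ n)⁻¹ * V := by
      rw [hV, Measure.real, Measure.real, Measure.addHaar_closedBall' _ _ (by positivity)]
      simp [ENNReal.toReal_mul, ht0.le]
    calc _ = ∫ ξ in Metric.closedBall (0 : EuclideanSpace ℝ (Fin n)) t⁻¹,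
          Real.exp (-μ) * (2 / Real.pi * γ) ^ 2 * t ^ 2 := by
          rw [setIntegral_const, hvol, smul_eq_mul]; ring
      _ ≤ ∫ ξ in Metric.closedBall (0 : EuclideanSpace ℝ (Fin n)) t⁻¹, |χ t ξ| ^ 2 := by
          refine integral_mono_ae (integrableOn_const measure_closedBall_lt_top.ne)
            (hfint.mono_set hsub) ?_
          filter_upwards [ae_restrict_mem measurableSet_closedBall,
            ae_restrict_of_ae (Measure.ae_ne volume 0)] with ξ hξ hne
          rw [hχ]
          refine aux_lower μ t ‖ξ‖ γ hμ (norm_pos_iff.2 hne) ht0 ?_ hγ0 hγ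
          have : ‖ξ‖ ≤ t⁻¹ := by simpa using hξ
          calc t * ‖ξ‖ ≤ t * t⁻¹ := by gcongr
            _ = 1 := mul_inv_cancel₀ ht0.ne'
      _ ≤ _ := setIntegral_mono_set hfint (ae_of_all _ fun ξ => by positivity)
          hsub.eventuallyLE
  · calc _ ≤ ∫ ξ in Metric.closedBall (0 : EuclideanSpace ℝ (Fin n)) 1,
          t ^ 2 * Real.exp (-(μ / 2 * ‖t • ξ‖)) :=
          setIntegral_mono_on hfint hgint.integrableOn measurableSet_closedBall hup
      _ ≤ ∫ ξ : EuclideanSpace ℝ (Fin n), t ^ 2 * Real.exp (-(μ / 2 * ‖t • ξ‖)) :=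
          setIntegral_le_integral hgint (ae_of_all _ fun ξ => by positivity)
      _ = t ^ 2 * ((t ^ n)⁻¹ * I) := by
          rw [integral_const_mul, Measure.integral_comp_smul volume
            (fun x : EuclideanSpace ℝ (Fin n) => Real.exp (-(μ / 2 * ‖x‖)))]
          rw [smul_eq_mul, abs_of_pos (by positivity), finrank_euclideanSpace_fin]
      _ ≤ _ := by
          have : 0 ≤ t ^ 2 * (t ^ n)⁻¹ := by positivity
          linarith
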